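/- arXiv:2505.10000 — 3 statements merged into one kernel-verified Lean document; each statement's English description precedes it below -/
import Mathlib

section
/- Let G be a group, σ : G → G a group homomorphism, and w ∈ G. Let K and A be subgroups of G such that: (i) a·K·a⁻¹ ⊆ K for every a ∈ A; (ii) K ∩ A = {1}; (iii) for every a ∈ A, the element w·σ(a)·w⁻¹ lies in the set K·A of products of an element of K and an element of A. Let φ : A → A be the (well-defined, by (ii) and (iii)) map characterized by w·σ(a)·w⁻¹ ∈ K·φ(a), and assume there exists an integer N ≥ 1 such that the N-fold composite φ^N sends every element of A to the identity. Then for every g ∈ G with g⁻¹·σ(g)·w⁻¹ ∈ K·A, there exists a unique a ∈ A such that (g·a)⁻¹·σ(g·a)·w⁻¹ ∈ K. -/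
/-!
Put `τ a = w σ(a) w⁻¹` and `x = g⁻¹ σ(g) w⁻¹`, so that `(g a)⁻¹ σ(g a) w⁻¹ = a⁻¹ x τ(a)`, and let
`b` be the component of `x` in `A`. As `A` normalizes `K` and meets it trivially, `φ` is an
endomorphism of `A`, and comparing components in `A` shows that `a⁻¹ x τ(a) ∈ K` says exactly that
`a` is a fixed point of `T a = b φ(a)`. Now `Tⁿ a = Tⁿ 1 · φⁿ(a)`, so once `φⁿ` kills `b` the
sequence `Tⁿ 1 = b φ(b) ⋯ φⁿ⁻¹(b)` is constant; its final value is fixed by `T`, and it is the only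
fixed point because `Tⁿ a = Tⁿ 1` as soon as `φⁿ` kills `a`.
-/

section FixedPoint

variable {M : Type*} [Monoid M]

theorem iterate_mul_map (f : M →* M) (b a : M) (n : ℕ) :
    (fun x ↦ b * f x)^[n] a = (fun x ↦ b * f x)^[n] 1 * f^[n] a := by
  induction n with
  | zero => simp only [Function.iterate_zero, id_eq, one_mul]
  | succ n ih => simp only [Function.iterate_succ_apply', ih, map_mul, mul_assoc]

theorem existsUnique_mul_map_eq (f : M →* M) (hf : ∀ a, ∃ n, f^[n] a = 1) (b : M) :
    ∃! a, b * f a = a := by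
  refine existsUnique_of_exists_of_unique ?_ fun a c ha hc ↦ ?_
  · obtain ⟨n, hn⟩ := hf b
    refine ⟨(fun x ↦ b * f x)^[n] 1, ?_⟩
    calc b * f ((fun x ↦ b * f x)^[n] 1)
        = (fun x ↦ b * f x)^[n] (b * f 1) :=
          Function.Commute.self_iterate (fun x ↦ b * f x) n 1
      _ = (fun x ↦ b * f x)^[n] 1 * f^[n] b := by rw [map_one, mul_one, iterate_mul_map]
      _ = (fun x ↦ b * f x)^[n] 1 := by rw [hn, mul_one]
  · obtain ⟨m, hm⟩ := hf a
    obtain ⟨n, hn⟩ := hf c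
    have ha_killed : f^[n + m] a = 1 := by
      rw [Function.iterate_add_apply, hm, iterate_map_one]
    have hc_killed : f^[n + m] c = 1 := by
      rw [Nat.add_comm, Function.iterate_add_apply, hn, iterate_map_one]
    calc a = (fun x ↦ b * f x)^[n + m] a := (Function.iterate_fixed ha _).symm
      _ = (fun x ↦ b * f x)^[n + m] c := by
        rw [iterate_mul_map f b a, iterate_mul_map f b c, ha_killed, hc_killed]
      _ = c := Function.iterate_fixed hc _

end FixedPoint

section Component

variable {G : Type*} [Group G] {K A : Subgroup G}

theorem mul_mul_inv_mem_of_mem_normalizer {x y a c : G} (ha : a ∈ Subgroup.normalizer (K : Set G))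
    (hx : x * a⁻¹ ∈ K) (hy : y * c⁻¹ ∈ K) : x * y * (a * c)⁻¹ ∈ K := by
  have hconj : a * (y * c⁻¹) * a⁻¹ ∈ K := (Subgroup.mem_normalizer_iff.mp ha _).mp hy
  have hsplit : x * y * (a * c)⁻¹ = x * a⁻¹ * (a * (y * c⁻¹) * a⁻¹) := by group
  exact hsplit ▸ K.mul_mem hx hconj

theorem mul_inv_mem_iff_eq_of_disjoint (hKA : Disjoint K A) {x : G} {a b : A}
    (hb : x * (b : G)⁻¹ ∈ K) : x * (a : G)⁻¹ ∈ K ↔ b = a := by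
  refine ⟨fun ha ↦ ?_, fun h ↦ h ▸ hb⟩
  have hquot : (b : G) * (a : G)⁻¹ ∈ K := by
    simpa only [mul_inv_rev, inv_inv, mul_assoc, inv_mul_cancel_left]
      using K.mul_mem (K.inv_mem hb) ha
  exact Subtype.ext <| mul_inv_eq_one.mp <|
    Subgroup.disjoint_def.mp hKA hquot (A.mul_mem b.2 (A.inv_mem a.2))

theorem map_mul_of_mul_inv_mem {H : Type*} [MulOneClass H]
    (hA : A ≤ Subgroup.normalizer (K : Set G)) (hKA : Disjoint K A) (τ : H →* G) (φ : H → A)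
    (hφ : ∀ h, τ h * (φ h : G)⁻¹ ∈ K) (h₁ h₂ : H) : φ (h₁ * h₂) = φ h₁ * φ h₂ := by
  refine (mul_inv_mem_iff_eq_of_disjoint hKA (hφ (h₁ * h₂))).mp ?_
  rw [map_mul, Subgroup.coe_mul]
  exact mul_mul_inv_mem_of_mem_normalizer (hA (φ h₁).2) (hφ h₁) (hφ h₂)

theorem inv_mul_mul_mem_iff_mul_eq (hA : A ≤ Subgroup.normalizer (K : Set G)) (hKA : Disjoint K A)
    {x y : G} {a b c : A} (hx : x * (b : G)⁻¹ ∈ K) (hy : y * (c : G)⁻¹ ∈ K) :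
    (a : G)⁻¹ * x * y ∈ K ↔ b * c = a := by
  have hxy : x * y * ((b * c : A) : G)⁻¹ ∈ K :=
    mul_mul_inv_mem_of_mem_normalizer (hA b.2) hx hy
  rw [mul_assoc, ← Subgroup.mem_normalizer_iff'.mp (inv_mem (hA a.2)),
    mul_inv_mem_iff_eq_of_disjoint hKA hxy]

theorem existsUnique_inv_mul_mul_mem (hA : A ≤ Subgroup.normalizer (K : Set G))
    (hKA : Disjoint K A) (τ : A →* G) (φ : A → A) (hφ : ∀ a, τ a * (φ a : G)⁻¹ ∈ K)
    (hφ_nil : ∀ a, ∃ n, φ^[n] a = 1) {x : G} {b : A} (hx : x * (b : G)⁻¹ ∈ K) :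
    ∃! a : A, (a : G)⁻¹ * x * τ a ∈ K := by
  simp only [inv_mul_mul_mem_iff_mul_eq hA hKA hx (hφ _)]
  exact existsUnique_mul_map_eq (.mk' φ (map_mul_of_mul_inv_mem hA hKA τ φ hφ)) hφ_nil b

end Component

theorem statement7_general (G : Type*) [Group G] (σ : G →* G) (w : G) (K A : Subgroup G)
    (hconj : ∀ a ∈ A, ∀ x ∈ K, a * x * a⁻¹ ∈ K)
    (hinter : K ⊓ A = ⊥)
    (φ : G → G) (hφmem : ∀ a ∈ A, φ a ∈ A)
    (hφ : ∀ a ∈ A, ∃ k ∈ K, w * σ a * w⁻¹ = k * φ a)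
    (hφ_nil : ∀ a ∈ A, ∃ n, φ^[n] a = 1) :
    ∀ g : G, (∃ k ∈ K, ∃ a ∈ A, g⁻¹ * σ g * w⁻¹ = k * a) →
      ∃! a : G, a ∈ A ∧ (g * a)⁻¹ * σ (g * a) * w⁻¹ ∈ K := by
  rintro g ⟨k, hk, b, hb, hg⟩
  have hmaps : Set.MapsTo φ A A := hφmem
  let τ : A →* G := (MulAut.conj w).toMonoidHom.comp (σ.comp A.subtype)
  have hτ (a : A) : τ a * (φ a)⁻¹ ∈ K := by
    obtain ⟨k, hk, h⟩ := hφ a a.2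
    exact (eq_mul_inv_of_mul_eq h.symm) ▸ hk
  have hnil (a : A) : ∃ n, (hmaps.restrict φ A A)^[n] a = 1 := by
    obtain ⟨n, hn⟩ := hφ_nil a a.2
    exact ⟨n, Subtype.ext ((hmaps.coe_iterate_restrict a n).trans hn)⟩
  have hx : g⁻¹ * σ g * w⁻¹ * b⁻¹ ∈ K := (eq_mul_inv_of_mul_eq hg.symm) ▸ hk
  have htwist (a : A) : (g * a)⁻¹ * σ (g * a) * w⁻¹ = (a : G)⁻¹ * (g⁻¹ * σ g * w⁻¹) * τ a := by
    change _ = (a : G)⁻¹ * (g⁻¹ * σ g * w⁻¹) * (w * σ a * w⁻¹)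
    rw [map_mul]
    group
  have hunique : ∃! a : A, (g * a)⁻¹ * σ (g * a) * w⁻¹ ∈ K := by
    simp only [htwist]
    exact existsUnique_inv_mul_mul_mem (b := ⟨b, hb⟩) (Subgroup.le_normalizer_iff.mpr hconj)
      (disjoint_iff.mpr hinter) τ (hmaps.restrict φ A A) hτ hnil hx
  obtain ⟨a, ha, huniq⟩ := hunique
  exact ⟨a, ⟨a.2, ha⟩, fun c ⟨hc, hcK⟩ ↦ congrArg Subtype.val (huniq ⟨c, hc⟩ hcK)⟩

/-- Let `G` be a group, `σ : G → G` a group homomorphism, `w ∈ G`, and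
`K, A ≤ G` subgroups with: (i) `A` normalizes into `K`; (ii) `K ∩ A = 1`;
(iii) for every `a ∈ A`, `w σ(a) w⁻¹ ∈ K · A`. Let `φ` be the map characterized on `A`
by `w σ(a) w⁻¹ ∈ K · φ(a)` (with values in `A`), and suppose the `N`-fold composite of
`φ` (some `N ≥ 1`) sends every element of `A` to the identity. Then every `g ∈ G` with
`g⁻¹ σ(g) w⁻¹ ∈ K · A` admits a unique `a ∈ A` with `(g a)⁻¹ σ(g a) w⁻¹ ∈ K`. -/
theorem statement7 (G : Type*) [Group G] (σ : G →* G) (w : G) (K A : Subgroup G)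
    (hconj : ∀ a ∈ A, ∀ x ∈ K, a * x * a⁻¹ ∈ K)
    (hinter : K ⊓ A = ⊥)
    (φ : G → G) (hφmem : ∀ a ∈ A, φ a ∈ A)
    (hφ : ∀ a ∈ A, ∃ k ∈ K, w * σ a * w⁻¹ = k * φ a)
    (N : ℕ) (hN : 1 ≤ N) (hφN : ∀ a ∈ A, φ^[N] a = 1) :
    ∀ g : G, (∃ k ∈ K, ∃ a ∈ A, g⁻¹ * σ g * w⁻¹ = k * a) →
      ∃! a : G, a ∈ A ∧ (g * a)⁻¹ * σ (g * a) * w⁻¹ ∈ K :=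
  statement7_general G σ w K A hconj hinter φ hφmem hφ fun a ha ↦ ⟨N, hφN a ha⟩
end

section
/- Let p be a prime and f ≥ 1 an integer, and set q = p^f. Let A be a commutative ring of characteristic p, let ϖ ∈ A, and assume A is adically complete (complete and separated) with respect to the ideal generated by ϖ. Let σ : A → A be the q-power Frobenius ring homomorphism x ↦ x^q, applied entrywise to matrices, and let σ̄ denote the induced endomorphism of A/(ϖ). Fix n ≥ 1, let g ∈ GLₙ(A), and let h₀ ∈ GLₙ(A/(ϖ)) satisfy h₀ · σ̄(h₀)⁻¹ = ḡ, where ḡ is the image of g in GLₙ(A/(ϖ)). Then there exists a unique h ∈ GLₙ(A) whose image in GLₙ(A/(ϖ)) equals h₀ and which satisfies h · σ(h)⁻¹ = g. -/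
/-!
The equation `h * σ(h)⁻¹ = g` says that `h` is a fixed point of the `σ`-semilinear map
`X ↦ g * σ(X)` on matrices. Since `σ(I) ⊆ I ^ 2`, this map improves a congruence modulo `I ^ k` to
one modulo `I ^ (2k)`, so Banach's fixed point argument in the `I`-adic topology
shows that every fixed point modulo `I` lifts uniquely. The lift of an invertible matrix is
invertible because `I` lies in the Jacobson radical.
-/

section AdicContraction

variable {A M : Type*} [CommRing A] {I : Ideal A} [AddCommGroup M] [Module A M]

/-- A self-map of `M` is an `I`-adic contraction if it raises congruences modulo `I ^ k • M` to
congruences modulo `I ^ (k + 1) • M`. Only `k ≥ 1` is required, so that points which differ modulo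
`I` are not constrained and fixed points are unique only within a residue class. -/
def IsAdicContraction (I : Ideal A) (T : M → M) : Prop :=
  ∀ ⦃k : ℕ⦄, 1 ≤ k → ∀ ⦃x y : M⦄, x ≡ y [SMOD (I ^ k • ⊤ : Submodule A M)] →
    T x ≡ T y [SMOD (I ^ (k + 1) • ⊤ : Submodule A M)]

namespace IsAdicContraction

variable {T : M → M} {x y : M}

theorem iterate_smodEq_iterate (hT : IsAdicContraction I T)
    (h : x ≡ y [SMOD (I • ⊤ : Submodule A M)]) (k : ℕ) :
    T^[k] x ≡ T^[k] y [SMOD (I ^ (k + 1) • ⊤ : Submodule A M)] := by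
  induction k with
  | zero => simpa only [zero_add, pow_one, Function.iterate_zero, id] using h
  | succ k ih =>
    simp only [Function.iterate_succ_apply']
    exact hT k.succ_pos ih

theorem iterate_smodEq_iterate_of_le (hT : IsAdicContraction I T)
    (hx : T x ≡ x [SMOD (I • ⊤ : Submodule A M)]) {k l : ℕ} (hkl : k ≤ l) :
    T^[k] x ≡ T^[l] x [SMOD (I ^ (k + 1) • ⊤ : Submodule A M)] := by
  induction l, hkl using Nat.le_induction with
  | base => rfl
  | succ l hkl ih =>
    have hstep : T^[l + 1] x ≡ T^[l] x [SMOD (I ^ (l + 1) • ⊤ : Submodule A M)] :=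
      hT.iterate_smodEq_iterate hx l
    exact ih.trans (hstep.symm.mono (Submodule.pow_smul_top_le I M (by lia)))

theorem eq_of_isFixedPt [IsHausdorff I M] (hT : IsAdicContraction I T)
    (hx : Function.IsFixedPt T x) (hy : Function.IsFixedPt T y)
    (hxy : x ≡ y [SMOD (I • ⊤ : Submodule A M)]) : x = y := by
  refine (IsHausdorff.eq_iff_smodEq (I := I)).2 fun k ↦ ?_
  have hiter := hT.iterate_smodEq_iterate hxy k
  rw [hx.iterate k, hy.iterate k] at hiter
  exact hiter.mono (Submodule.pow_smul_top_le I M k.le_succ)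

theorem exists_isFixedPt [IsAdicComplete I M] (hT : IsAdicContraction I T)
    (hx : T x ≡ x [SMOD (I • ⊤ : Submodule A M)]) :
    ∃ y, Function.IsFixedPt T y ∧ y ≡ x [SMOD (I • ⊤ : Submodule A M)] := by
  have hcauchy {k l : ℕ} (hkl : k ≤ l) :
      T^[k] x ≡ T^[l] x [SMOD (I ^ k • ⊤ : Submodule A M)] :=
    (hT.iterate_smodEq_iterate_of_le hx hkl).mono (Submodule.pow_smul_top_le I M k.le_succ)
  obtain ⟨y, hy⟩ := IsPrecomplete.prec inferInstance hcauchy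
  refine ⟨y, (IsHausdorff.eq_iff_smodEq (I := I)).2 fun k ↦ ?_, ?_⟩
  · have hTy : T^[k + 2] x ≡ T y [SMOD (I ^ (k + 2) • ⊤ : Submodule A M)] := by
      rw [Function.iterate_succ_apply']
      exact hT k.succ_pos (hy (k + 1))
    exact (hTy.symm.trans (hy (k + 2))).mono (Submodule.pow_smul_top_le I M (by lia))
  · have hy₁ : T x ≡ y [SMOD (I • ⊤ : Submodule A M)] := by simpa using hy 1
    exact hy₁.symm.trans hx

theorem existsUnique_isFixedPt [IsAdicComplete I M] (hT : IsAdicContraction I T)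
    (hx : T x ≡ x [SMOD (I • ⊤ : Submodule A M)]) :
    ∃! y, Function.IsFixedPt T y ∧ y ≡ x [SMOD (I • ⊤ : Submodule A M)] := by
  obtain ⟨y, hy, hyx⟩ := hT.exists_isFixedPt hx
  exact ⟨y, ⟨hy, hyx⟩, fun z ⟨hz, hzx⟩ ↦ hT.eq_of_isFixedPt hz hy (hzx.trans hyx.symm)⟩

theorem of_semilinearMap {σ : A →+* A} (hσ : I.map σ ≤ I ^ 2) (φ : M →ₛₗ[σ] M) :
    IsAdicContraction I φ := by
  intro k hk x y hxy
  rw [SModEq.sub_mem] at hxy ⊢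
  rw [← map_sub]
  generalize x - y = z at hxy ⊢
  have hσk {a : A} (ha : a ∈ I ^ k) : σ a ∈ I ^ (k + 1) := by
    have hmap : (I ^ k).map σ ≤ I ^ (k + 1) := calc
      (I ^ k).map σ = I.map σ ^ k := Ideal.map_pow σ I k
      _ ≤ (I ^ 2) ^ k := Ideal.pow_right_mono hσ k
      _ = I ^ (2 * k) := (pow_mul I 2 k).symm
      _ ≤ I ^ (k + 1) := Ideal.pow_le_pow_right (by lia)
    exact hmap (Ideal.mem_map_of_mem σ ha)
  induction hxy using Submodule.smul_induction_on' with
  | smul a ha m _ =>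
    rw [map_smulₛₗ]
    exact Submodule.smul_mem_smul (hσk ha) Submodule.mem_top
  | add u _ v _ hu hv =>
    rw [map_add]
    exact add_mem hu hv

end IsAdicContraction

end AdicContraction

section Pi

variable {A : Type*} [CommRing A] (I : Ideal A)

theorem mem_smul_top_pi_iff {ι : Type*} [Finite ι] {M : ι → Type*} [∀ i, AddCommGroup (M i)]
    [∀ i, Module A (M i)] {x : ∀ i, M i} :
    x ∈ (I • ⊤ : Submodule A (∀ i, M i)) ↔ ∀ i, x i ∈ (I • ⊤ : Submodule A (M i)) := by
  classical
  have := Fintype.ofFinite ι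
  refine ⟨fun hx i ↦ Submodule.smul_top_le_comap_smul_top I (LinearMap.proj i) hx, fun hx ↦ ?_⟩
  rw [← Finset.univ_sum_single x]
  exact sum_mem fun i _ ↦
    Submodule.smul_top_le_comap_smul_top I (LinearMap.single A M i) (hx i)

theorem isAdicComplete_pi {ι : Type*} [Finite ι] (M : ι → Type*) [∀ i, AddCommGroup (M i)]
    [∀ i, Module A (M i)] [∀ i, IsAdicComplete I (M i)] : IsAdicComplete I (∀ i, M i) := by
  classical
  have := Fintype.ofFinite ι
  have hcomp : AdicCompletion.piEquivOfFintype I M ∘ AdicCompletion.of I (∀ i, M i) =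
      Pi.map fun i ↦ AdicCompletion.of I (M i) := by
    ext x i k
    simp
  rw [← AdicCompletion.of_bijective_iff,
    ← Function.Bijective.of_comp_iff' (AdicCompletion.piEquivOfFintype I M).bijective, hcomp]
  exact Function.Bijective.piMap fun i ↦ AdicCompletion.of_bijective I (M i)

end Pi

section Matrix

variable {A : Type*} [CommRing A] {m n : Type*}

instance isAdicComplete_matrix (I : Ideal A) [IsAdicComplete I A] [Finite m] [Finite n] :
    IsAdicComplete I (Matrix m n A) :=
  have := isAdicComplete_pi I fun _ : n ↦ A
  isAdicComplete_pi I fun _ : m ↦ n → A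

theorem matrix_smodEq_iff_map_mk_eq {I : Ideal A} [Finite m] [Finite n] {X Y : Matrix m n A} :
    X ≡ Y [SMOD (I • ⊤ : Submodule A (Matrix m n A))] ↔
      X.map (Ideal.Quotient.mk I) = Y.map (Ideal.Quotient.mk I) := by
  have hmem : X - Y ∈ (I • ⊤ : Submodule A (Matrix m n A)) ↔ ∀ i j, X i j - Y i j ∈ I :=
    (mem_smul_top_pi_iff I).trans <| forall_congr' fun i ↦ (mem_smul_top_pi_iff I).trans <| by
      simp
  simp only [SModEq.sub_mem, hmem, ← Matrix.ext_iff, Matrix.map_apply, Ideal.Quotient.eq]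

/-- The `σ`-semilinear map `X ↦ g * σ(X)` on matrices, whose invertible fixed points are the
solutions of the twisted conjugacy equation `X * σ(X)⁻¹ = g`. -/
def twistedMulLeft [Fintype m] (σ : A →+* A) (g : Matrix m m A) :
    Matrix m n A →ₛₗ[σ] Matrix m n A where
  toFun X := g * X.map σ
  map_add' X Y := by rw [Matrix.map_add σ (map_add σ), Matrix.mul_add]
  map_smul' a X := by rw [Matrix.map_smulₛₗ σ σ a (map_mul σ a), Matrix.mul_smul]

@[simp]
theorem twistedMulLeft_apply [Fintype m] (σ : A →+* A) (g : Matrix m m A) (X : Matrix m n A) :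
    twistedMulLeft σ g X = g * X.map σ :=
  rfl

theorem existsUnique_isFixedPt_twistedMulLeft_lift [Fintype m] [Finite n] {I : Ideal A}
    [IsAdicComplete I A] {σ : A →+* A} (hσ : I.map σ ≤ I ^ 2) {σbar : A ⧸ I →+* A ⧸ I}
    (hσbar : ∀ x, σbar (Ideal.Quotient.mk I x) = Ideal.Quotient.mk I (σ x))
    (g : Matrix m m A) {X₀ : Matrix m n (A ⧸ I)}
    (hX₀ : Function.IsFixedPt (twistedMulLeft σbar (g.map (Ideal.Quotient.mk I))) X₀) :
    ∃! X : Matrix m n A,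
      Function.IsFixedPt (twistedMulLeft σ g) X ∧ X.map (Ideal.Quotient.mk I) = X₀ := by
  obtain ⟨X, rfl⟩ : ∃ X : Matrix m n A, X.map (Ideal.Quotient.mk I) = X₀ :=
    Ideal.Quotient.mk_surjective.comp_left.comp_left X₀
  have hfixed : twistedMulLeft σ g X ≡ X [SMOD (I • ⊤ : Submodule A (Matrix m n A))] := by
    rw [matrix_smodEq_iff_map_mk_eq, ← hX₀.eq]
    ext i j
    simp [Matrix.mul_apply, hσbar]
  simpa only [matrix_smodEq_iff_map_mk_eq] using
    (IsAdicContraction.of_semilinearMap hσ (twistedMulLeft σ g)).existsUnique_isFixedPt hfixed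

end Matrix

section GeneralLinearGroup

variable {R S n : Type*} [CommRing R] [CommRing S] [Fintype n] [DecidableEq n]

theorem isLocalHom_mapMatrix (φ : R →+* S) [IsLocalHom φ] :
    IsLocalHom (φ.mapMatrix : Matrix n n R →+* Matrix n n S) where
  map_nonunit X hX := by
    rw [Matrix.isUnit_iff_isUnit_det, ← RingHom.map_det] at hX
    exact (Matrix.isUnit_iff_isUnit_det X).2 (hX.of_map φ)

theorem mul_inv_map_eq_iff_isFixedPt (σ : R →+* R) (g h : GL n R) :
    h * (Matrix.GeneralLinearGroup.map σ h)⁻¹ = g ↔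
      Function.IsFixedPt (twistedMulLeft σ (g : Matrix n n R)) (h : Matrix n n R) := by
  rw [mul_inv_eq_iff_eq_mul, eq_comm, Units.ext_iff]
  rfl

end GeneralLinearGroup

theorem ideal_map_le_sq_of_eq_pow {A : Type*} [CommRing A] (I : Ideal A) {σ : A →+* A} {q : ℕ}
    (hq : 2 ≤ q) (hσ : ∀ x, σ x = x ^ q) : I.map σ ≤ I ^ 2 :=
  Ideal.map_le_iff_le_comap.2 fun x hx ↦ by
    rw [Ideal.mem_comap, hσ]
    exact Ideal.pow_le_pow_right hq (Ideal.pow_mem_pow hx q)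

theorem statement8_general {n A : Type*} [Fintype n] [DecidableEq n] [CommRing A] (I : Ideal A)
    [IsAdicComplete I A] (σ : A →+* A) (hσ : I.map σ ≤ I ^ 2) (σbar : A ⧸ I →+* A ⧸ I)
    (hσbar : ∀ x, σbar (Ideal.Quotient.mk I x) = Ideal.Quotient.mk I (σ x))
    (g : GL n A) (h₀ : GL n (A ⧸ I))
    (hcompat : h₀ * (Matrix.GeneralLinearGroup.map σbar h₀)⁻¹ =
      Matrix.GeneralLinearGroup.map (Ideal.Quotient.mk I) g) :
    ∃! h : GL n A,
      Matrix.GeneralLinearGroup.map (Ideal.Quotient.mk I) h = h₀ ∧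
        h * (Matrix.GeneralLinearGroup.map σ h)⁻¹ = g := by
  obtain ⟨X, ⟨hXfixed, hXlift⟩, hXunique⟩ :=
    existsUnique_isFixedPt_twistedMulLeft_lift hσ hσbar (g : Matrix n n A)
      ((mul_inv_map_eq_iff_isFixedPt σbar _ h₀).1 hcompat)
  have : IsLocalHom (Ideal.Quotient.mk I) :=
    isLocalHom_of_le_jacobson_bot I (IsAdicComplete.le_jacobson_bot I)
  have hmap : IsUnit ((Ideal.Quotient.mk I).mapMatrix X) := by
    rw [RingHom.mapMatrix_apply, hXlift]
    exact h₀.isUnit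
  obtain ⟨h, rfl⟩ := (isLocalHom_mapMatrix (Ideal.Quotient.mk I)).map_nonunit X hmap
  refine ⟨h, ⟨Units.ext hXlift, (mul_inv_map_eq_iff_isFixedPt σ g h).2 hXfixed⟩, ?_⟩
  rintro h' ⟨hlift, hsol⟩
  have hfixed := (mul_inv_map_eq_iff_isFixedPt σ g h').1 hsol
  exact Units.ext (hXunique h' ⟨hfixed, congrArg Units.val hlift⟩)

/-- Let `p` be a prime, `f ≥ 1`, `q = p ^ f`. Let `A` be a commutative
ring of characteristic `p`, `ϖ ∈ A`, with `A` adically complete with respect to the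
ideal `(ϖ)`. Let `σ : A → A` be the `q`-power Frobenius ring homomorphism, applied
entrywise to matrices, and `σ̄` the induced endomorphism of `A ⧸ (ϖ)`. Fix `n ≥ 1`,
`g ∈ GLₙ(A)`, and `h₀ ∈ GLₙ(A ⧸ (ϖ))` with `h₀ * σ̄(h₀)⁻¹ = ḡ`. Then there is a
unique `h ∈ GLₙ(A)` reducing to `h₀` with `h * σ(h)⁻¹ = g`. -/
theorem statement8 (p f n : ℕ) (hp : p.Prime) (hf : 1 ≤ f) (hn : 1 ≤ n)
    (A : Type*) [CommRing A] [CharP A p] (ϖ : A)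
    [IsAdicComplete (Ideal.span {ϖ}) A]
    (σ : A →+* A) (hσ : ∀ x : A, σ x = x ^ p ^ f)
    (σbar : A ⧸ Ideal.span {ϖ} →+* A ⧸ Ideal.span {ϖ})
    (hσbar : ∀ x : A ⧸ Ideal.span {ϖ}, σbar x = x ^ p ^ f)
    (g : GL (Fin n) A) (h₀ : GL (Fin n) (A ⧸ Ideal.span {ϖ}))
    (hcompat : h₀ * (Matrix.GeneralLinearGroup.map σbar h₀)⁻¹ =
      Matrix.GeneralLinearGroup.map (Ideal.Quotient.mk (Ideal.span {ϖ})) g) :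
    ∃! h : GL (Fin n) A,
      Matrix.GeneralLinearGroup.map (Ideal.Quotient.mk (Ideal.span {ϖ})) h = h₀ ∧
        h * (Matrix.GeneralLinearGroup.map σ h)⁻¹ = g := by
  have hq : 2 ≤ p ^ f := hp.two_le.trans (Nat.le_self_pow (Nat.one_le_iff_ne_zero.1 hf) p)
  exact statement8_general _ σ (ideal_map_le_sq_of_eq_pow _ hq hσ) σbar
    (fun x ↦ by rw [hσ, hσbar, map_pow]) g h₀ hcompat
end

section
/- Let V be a valuation ring whose field of fractions K is algebraically closed, and let n ≥ 1. Then every g ∈ GLₙ(K) admits a Cartan decomposition g = g₁ · D · g₂, where g₁ and g₂ lie in the image of the natural map GLₙ(V) → GLₙ(K), and D is a diagonal matrix with diagonal entries d₁, …, dₙ ∈ K, each nonzero, satisfying d_{i+1}/d_i ∈ V for every 1 ≤ i < n. -/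
/-!
Gaussian elimination with full pivoting works over a valuation ring: an entry of `M` of maximal
valuation divides all the others up to factors in `V`, so its row and column can be cleared by
integral operations, and induction on the Schur complement makes `M` diagonal. No relation between
the successive pivots needs to be tracked, since permutation matrices are integral and the diagonal
entries can be sorted by valuation afterwards.
-/

open Matrix

section HasDiagonalForm

variable (V : Type*) [CommRing V] {K : Type*} [CommRing K] [Algebra V K]
  {m n : Type*} [Fintype m] [DecidableEq m] [Fintype n] [DecidableEq n]

/-- `M` has a diagonal form over `V` if it is diagonal up to multiplication on both sides by
elements of `GL m V`, that is, if `M` lies in `GL m V * T * GL m V` for `T` the diagonal matrices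
over `K`. Neither order nor invertibility is imposed on the diagonal entries, so that the notion
makes sense for an unordered index type and passes to Schur complements. -/
def HasDiagonalForm (M : Matrix m m K) : Prop :=
  ∃ (P Q : Matrix m m V) (d : m → K), IsUnit P ∧ IsUnit Q ∧
    M = P.map (algebraMap V K) * diagonal d * Q.map (algebraMap V K)

theorem hasDiagonalForm_diagonal (d : m → K) : HasDiagonalForm V (diagonal d) :=
  ⟨1, 1, d, isUnit_one, isUnit_one, by simp [Matrix.map_one]⟩

theorem hasDiagonalForm_of_subsingleton [Subsingleton m] (M : Matrix m m K) :
    HasDiagonalForm V M := by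
  have : M = diagonal M.diag := by
    ext i j
    simp [Subsingleton.elim j i]
  exact this ▸ hasDiagonalForm_diagonal V M.diag

namespace HasDiagonalForm

variable {V}

theorem map_mul_mul_map {M : Matrix m m K} (hM : HasDiagonalForm V M) {P Q : Matrix m m V}
    (hP : IsUnit P) (hQ : IsUnit Q) :
    HasDiagonalForm V (P.map (algebraMap V K) * M * Q.map (algebraMap V K)) := by
  obtain ⟨P', Q', d, hP', hQ', rfl⟩ := hM
  exact ⟨P * P', Q' * Q, d, hP.mul hP', hQ'.mul hQ, by simp only [Matrix.map_mul, Matrix.mul_assoc]⟩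

theorem submatrix_equiv {M : Matrix m m K} (hM : HasDiagonalForm V M) (e f : n ≃ m) :
    HasDiagonalForm V (M.submatrix e f) := by
  obtain ⟨P, Q, d, hP, hQ, rfl⟩ := hM
  refine ⟨P.submatrix e e, Q.submatrix e f, d ∘ e, (isUnit_submatrix_equiv e e).2 hP,
    (isUnit_submatrix_equiv e f).2 hQ, ?_⟩
  rw [← submatrix_map, ← submatrix_map, ← submatrix_diagonal_equiv, submatrix_mul_equiv,
    submatrix_mul_equiv]

theorem of_submatrix_equiv {M : Matrix m m K} (e f : n ≃ m)
    (hM : HasDiagonalForm V (M.submatrix e f)) : HasDiagonalForm V M := by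
  simpa using hM.submatrix_equiv e.symm f.symm

theorem fromBlocks_diagonal {A : Matrix m m K} {D : Matrix n n K} (hA : HasDiagonalForm V A)
    (hD : HasDiagonalForm V D) : HasDiagonalForm V (fromBlocks A 0 0 D) := by
  obtain ⟨P, Q, d, hP, hQ, rfl⟩ := hA
  obtain ⟨P', Q', d', hP', hQ', rfl⟩ := hD
  refine ⟨fromBlocks P 0 0 P', fromBlocks Q 0 0 Q', Sum.elim d d',
    isUnit_fromBlocks_zero₂₁.2 ⟨hP, hP'⟩, isUnit_fromBlocks_zero₂₁.2 ⟨hQ, hQ'⟩, ?_⟩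
  simp [fromBlocks_map, fromBlocks_multiply, ← Matrix.fromBlocks_diagonal]

theorem fromBlocks_of_schurComplement {A : Matrix m m K} {D : Matrix n n K} {B : Matrix m n V}
    {C : Matrix n m V}
    (hS : HasDiagonalForm V (A - B.map (algebraMap V K) * D * C.map (algebraMap V K)))
    (hD : HasDiagonalForm V D) :
    HasDiagonalForm V
      (fromBlocks A (B.map (algebraMap V K) * D) (D * C.map (algebraMap V K)) D) := by
  convert (hS.fromBlocks_diagonal hD).map_mul_mul_map (P := fromBlocks 1 B 0 1)
    (Q := fromBlocks 1 0 C 1) (by simp) (by simp) using 1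
  simp [fromBlocks_map, fromBlocks_multiply, Matrix.map_one]

theorem of_forall_dvd_inr {ι : Type*} [Fintype ι] [DecidableEq ι] [Unique ι]
    {M : Matrix (m ⊕ ι) (m ⊕ ι) K}
    (hM : ∀ i j, ∃ v : V, algebraMap V K v * M (.inr default) (.inr default) = M i j)
    (hm : ∀ N : Matrix m m K, HasDiagonalForm V N) : HasDiagonalForm V M := by
  choose W hW using hM
  let D := M.toBlocks₂₂
  let B : Matrix m ι V := of fun i _ ↦ W (.inl i) (.inr default)
  let C : Matrix ι m V := of fun _ j ↦ W (.inr default) (.inl j)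
  have hB : M.toBlocks₁₂ = B.map (algebraMap V K) * D := by
    ext i k
    simp [B, D, toBlocks₁₂, toBlocks₂₂, Matrix.mul_apply, hW, Subsingleton.elim k default]
  have hC : M.toBlocks₂₁ = D * C.map (algebraMap V K) := by
    ext k j
    simp [C, D, toBlocks₂₁, toBlocks₂₂, Matrix.mul_apply, mul_comm (M _ _), hW,
      Subsingleton.elim k default]
  rw [← fromBlocks_toBlocks M, hB, hC]
  exact fromBlocks_of_schurComplement (hm _) (hasDiagonalForm_of_subsingleton V D)

theorem exists_monotone_comp {Γ : Type*} [LinearOrder Γ] {k : ℕ} {M : Matrix (Fin k) (Fin k) K}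
    (hM : HasDiagonalForm V M) (f : K → Γ) :
    ∃ (P Q : Matrix (Fin k) (Fin k) V) (d : Fin k → K), IsUnit P ∧ IsUnit Q ∧
      Monotone (f ∘ d) ∧ M = P.map (algebraMap V K) * diagonal d * Q.map (algebraMap V K) := by
  obtain ⟨P, Q, d, hP, hQ, rfl⟩ := hM
  let σ := Tuple.sort (f ∘ d)
  refine ⟨P.submatrix (Equiv.refl _) σ, Q.submatrix σ (Equiv.refl _), d ∘ σ,
    (isUnit_submatrix_equiv _ _).2 hP, (isUnit_submatrix_equiv _ _).2 hQ,
    Tuple.monotone_sort (f ∘ d), ?_⟩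
  rw [← submatrix_map, ← submatrix_map, ← submatrix_diagonal_equiv, submatrix_mul_equiv,
    submatrix_mul_equiv]
  rfl

end HasDiagonalForm

end HasDiagonalForm

section ValuationRing

variable (V : Type*) [CommRing V] [IsDomain V] [ValuationRing V]
  {K : Type*} [Field K] [Algebra V K] [IsFractionRing V K]

theorem valuation_le_valuation_iff_exists_algebraMap_mul_eq {x y : K} :
    ValuationRing.valuation V K x ≤ ValuationRing.valuation V K y ↔
      ∃ v : V, algebraMap V K v * y = x := by
  simp only [← Algebra.smul_def]
  rfl

theorem exists_forall_exists_algebraMap_mul_eq {ι : Type*} [Finite ι] [Nonempty ι] (f : ι → K) :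
    ∃ i, ∀ j, ∃ v : V, algebraMap V K v * f i = f j := by
  obtain ⟨i, hi⟩ := Finite.exists_max fun i ↦ ValuationRing.valuation V K (f i)
  exact ⟨i, fun j ↦ (valuation_le_valuation_iff_exists_algebraMap_mul_eq V).1 (hi j)⟩

theorem hasDiagonalForm_of_valuationRing {m : Type*} [Fintype m] [DecidableEq m]
    (M : Matrix m m K) : HasDiagonalForm V M := by
  refine Fintype.induction_subsingleton_or_nontrivial
    (P := fun α _ ↦ ∀ [DecidableEq α] (M : Matrix α α K), HasDiagonalForm V M) m ?_ ?_ M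
  · intro α _ _ _ M
    exact hasDiagonalForm_of_subsingleton V M
  · intro α _ _ ih _ M
    obtain ⟨⟨i, j⟩, hij⟩ :=
      exists_forall_exists_algebraMap_mul_eq V fun p : α × α ↦ M p.1 p.2
    let e := Equiv.subtypeNeSumPUnit.{0} i
    let f := e.trans (Equiv.swap i j)
    have he : e (.inr default) = i := by simp [e]
    have hf : f (.inr default) = j := by simp [f, he]
    refine .of_submatrix_equiv e f (.of_forall_dvd_inr (fun k l ↦ ?_) (ih _ ?_))
    · simpa only [submatrix_apply, he, hf] using hij (e k, f l)
    · exact Fintype.card_subtype_lt (x := i) (by simp)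

end ValuationRing

theorem statement11_general (V : Type*) [CommRing V] [IsDomain V] [ValuationRing V]
    (K : Type*) [Field K] [Algebra V K] [IsFractionRing V K] (n : ℕ) (g : GL (Fin n) K) :
    ∃ (g₁ g₂ : GL (Fin n) V) (d : Fin n → K),
      (∀ i, d i ≠ 0) ∧
      (∀ i : Fin n, ∀ hi : (i : ℕ) + 1 < n,
        ∃ v : V, algebraMap V K v = d ⟨(i : ℕ) + 1, hi⟩ / d i) ∧
      (g : Matrix (Fin n) (Fin n) K) =
        (Matrix.GeneralLinearGroup.map (algebraMap V K) g₁ : Matrix (Fin n) (Fin n) K) *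
          Matrix.diagonal d *
          (Matrix.GeneralLinearGroup.map (algebraMap V K) g₂ : Matrix (Fin n) (Fin n) K) := by
  obtain ⟨P, Q, d, hP, hQ, hd, hg⟩ :=
    (hasDiagonalForm_of_valuationRing V (g : Matrix (Fin n) (Fin n) K)).exists_monotone_comp
      fun x ↦ OrderDual.toDual (ValuationRing.valuation V K x)
  have hunit : IsUnit (diagonal d) :=
    isUnit_of_mul_isUnit_right (isUnit_of_mul_isUnit_left (hg ▸ g.isUnit))
  have hd₀ : ∀ i, d i ≠ 0 := fun i ↦ (Pi.isUnit_iff.1 (isUnit_diagonal.1 hunit) i).ne_zero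
  refine ⟨hP.unit, hQ.unit, d, hd₀, fun i hi ↦ ?_, hg⟩
  obtain ⟨v, hv⟩ := (valuation_le_valuation_iff_exists_algebraMap_mul_eq V).1
    (hd (Fin.le_def.2 (Nat.le_succ i) : i ≤ ⟨i + 1, hi⟩))
  exact ⟨v, eq_div_of_mul_eq (hd₀ i) hv⟩

/-- Let `V` be a valuation ring whose fraction field `K` is
algebraically closed, and `n ≥ 1`. Then every `g ∈ GLₙ(K)` admits a Cartan
decomposition `g = g₁ * D * g₂` with `g₁, g₂` in the image of `GLₙ(V) → GLₙ(K)` and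
`D` diagonal with nonzero entries `d₁, …, dₙ` satisfying `d_{i+1} / d_i ∈ V`. -/
theorem statement11 (V : Type*) [CommRing V] [IsDomain V] [ValuationRing V]
    (K : Type*) [Field K] [Algebra V K] [IsFractionRing V K] [IsAlgClosed K]
    (n : ℕ) (hn : 1 ≤ n) (g : GL (Fin n) K) :
    ∃ (g₁ g₂ : GL (Fin n) V) (d : Fin n → K),
      (∀ i, d i ≠ 0) ∧
      (∀ i : Fin n, ∀ hi : (i : ℕ) + 1 < n,
        ∃ v : V, algebraMap V K v = d ⟨(i : ℕ) + 1, hi⟩ / d i) ∧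
      (g : Matrix (Fin n) (Fin n) K) =
        (Matrix.GeneralLinearGroup.map (algebraMap V K) g₁ : Matrix (Fin n) (Fin n) K) *
          Matrix.diagonal d *
          (Matrix.GeneralLinearGroup.map (algebraMap V K) g₂ : Matrix (Fin n) (Fin n) K) :=
  statement11_general V K n g
end
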